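/- (Correctness of the reduction from 3-CNF-SAT to the Minimal Connecting Edge problem.) Let φ be a 3-CNF formula with n ≥ 1 variables and m ≥ 1 clauses, and consider its MCE gadget graph. Then φ is satisfiable if and only if there exists a selection R ⊆ Ê that is a union of classes, has total weight at most n, and connects the source u_1 to the sink b_m. -/

import Mathlib

/-- A literal over variables `x_1, …, x_n` (indexed by `Fin n`): a variable
index together with a polarity (`true` for `x_i`, `false` for `¬x_i`). -/
structure Lit (n : ℕ) where
  var : Fin n
  pos : Bool
  deriving DecidableEq

/-- A 3-CNF formula with `n` variables and `m` clauses: clause `j` has three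
literals, indexed by `Fin 3`. -/
def CnfFormula (n m : ℕ) := Fin m → Fin 3 → Lit n

/-- The assignment `σ` satisfies the formula `φ`: every clause contains a
literal made true by `σ`. -/
def Satisfies {n m : ℕ} (φ : CnfFormula n m) (σ : Fin n → Bool) : Prop :=
  ∀ j : Fin m, ∃ k : Fin 3, σ (φ j k).var = (φ j k).pos

/-- The nodes of the MCE gadget graph: six nodes per variable gadget and
eight nodes per clause gadget. -/
inductive MceNode (n m : ℕ) : Type
  | u  : Fin n → MceNode n m
  | ut : Fin n → MceNode n m
  | vt : Fin n → MceNode n m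
  | uf : Fin n → MceNode n m
  | vf : Fin n → MceNode n m
  | v  : Fin n → MceNode n m
  | a  : Fin m → MceNode n m
  | ak : Fin m → Fin 3 → MceNode n m
  | bk : Fin m → Fin 3 → MceNode n m
  | b  : Fin m → MceNode n m
  deriving DecidableEq, Fintype

/-- The solid (always present) edges of the MCE gadget graph. -/
inductive SolidEdge (n m : ℕ) : MceNode n m → MceNode n m → Prop
  | u_ut (i : Fin n) : SolidEdge n m (.u i) (.ut i)
  | u_uf (i : Fin n) : SolidEdge n m (.u i) (.uf i)
  | vt_v (i : Fin n) : SolidEdge n m (.vt i) (.v i)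
  | vf_v (i : Fin n) : SolidEdge n m (.vf i) (.v i)
  | a_ak (j : Fin m) (k : Fin 3) : SolidEdge n m (.a j) (.ak j k)
  | bk_b (j : Fin m) (k : Fin 3) : SolidEdge n m (.bk j k) (.b j)
  | v_u (i i' : Fin n) (h : (i : ℕ) + 1 = (i' : ℕ)) : SolidEdge n m (.v i) (.u i')
  | v_a (i : Fin n) (j : Fin m) (hi : (i : ℕ) + 1 = n) (hj : (j : ℕ) = 0) :
      SolidEdge n m (.v i) (.a j)
  | b_a (j j' : Fin m) (h : (j : ℕ) + 1 = (j' : ℕ)) : SolidEdge n m (.b j) (.a j')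

/-- The class `P_i` of candidate edges: the variable edge `(u_i^t, v_i^t)`
together with every clause edge `(a_j^k, b_j^k)` whose literal is `x_i`. -/
def Pclass {n m : ℕ} (φ : CnfFormula n m) (i : Fin n) :
    Finset (MceNode n m × MceNode n m) :=
  {(MceNode.ut i, MceNode.vt i)} ∪
    ((Finset.univ : Finset (Fin m × Fin 3)).filter
        (fun jk => φ jk.1 jk.2 = ⟨i, true⟩)).image
      (fun jk => (MceNode.ak jk.1 jk.2, MceNode.bk jk.1 jk.2))

/-- The class `N_i` of candidate edges: the variable edge `(u_i^f, v_i^f)`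
together with every clause edge `(a_j^k, b_j^k)` whose literal is `¬x_i`. -/
def Nclass {n m : ℕ} (φ : CnfFormula n m) (i : Fin n) :
    Finset (MceNode n m × MceNode n m) :=
  {(MceNode.uf i, MceNode.vf i)} ∪
    ((Finset.univ : Finset (Fin m × Fin 3)).filter
        (fun jk => φ jk.1 jk.2 = ⟨i, false⟩)).image
      (fun jk => (MceNode.ak jk.1 jk.2, MceNode.bk jk.1 jk.2))

/-- The set `Ê` of all candidate edges. -/
def Ehat {n m : ℕ} (φ : CnfFormula n m) : Finset (MceNode n m × MceNode n m) :=
  (Finset.univ : Finset (Fin n)).biUnion (fun i => Pclass φ i ∪ Nclass φ i)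

/-- The weight of a candidate edge: `1` for the variable-gadget edges
`(u_i^t, v_i^t)` and `(u_i^f, v_i^f)`, `0` for the clause-gadget edges. -/
def edgeWeight {n m : ℕ} : MceNode n m × MceNode n m → ℕ
  | (MceNode.ut _, MceNode.vt _) => 1
  | (MceNode.uf _, MceNode.vf _) => 1
  | _ => 0

/-- The total weight of a selection of candidate edges. -/
def selWeight {n m : ℕ} (R : Finset (MceNode n m × MceNode n m)) : ℕ :=
  ∑ e ∈ R, edgeWeight e

/-- `R` is a union of classes: whenever it meets a class `P_i` or `N_i`, it
contains the whole class. -/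
def IsUnionOfClasses {n m : ℕ} (φ : CnfFormula n m)
    (R : Finset (MceNode n m × MceNode n m)) : Prop :=
  ∀ i : Fin n,
    ((Pclass φ i ∩ R).Nonempty → Pclass φ i ⊆ R) ∧
    ((Nclass φ i ∩ R).Nonempty → Nclass φ i ⊆ R)

/-- `R` connects the source `u_1` to the sink `b_m`: there is a directed path
from `u_1` to `b_m` using solid edges together with the edges of `R`. -/
def Connects {n m : ℕ} (hn : 0 < n) (hm : 0 < m)
    (R : Finset (MceNode n m × MceNode n m)) : Prop :=
  Relation.ReflTransGen (fun x y => SolidEdge n m x y ∨ (x, y) ∈ R)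
    (MceNode.u ⟨0, hn⟩) (MceNode.b ⟨m - 1, Nat.sub_lt hm Nat.one_pos⟩)

/-!
A union of classes is determined by the set `L` of literals whose classes it contains, and its
weight is the number of literals in `L`, because each class contains exactly one edge of weight `1`.
The gadgets are connected in series and only candidate edges lead from the front half of a gadget to
its back half, so a path from source to sink exists iff `L` has a literal of each variable and one
of each clause. If moreover `L` has at most `n` elements, it has exactly one literal of each
variable, so it is the set of literals made true by a satisfying assignment.
-/

section Paths

variable {α : Type*} {r : α → α → Prop}

theorem exists_rel_leaving_of_reflTransGen {p : α → Prop} {a b : α}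
    (hab : Relation.ReflTransGen r a b) (ha : p a) (hb : ¬ p b) :
    ∃ x y, r x y ∧ p x ∧ ¬ p y := by
  induction hab with
  | refl => exact absurd ha hb
  | @tail c d _ hcd ih =>
    by_cases hc : p c
    · exact ⟨c, d, hcd, hc, hb⟩
    · exact ih hc

theorem reflTransGen_of_linked_segments {k : ℕ} {s t : Fin k → α}
    (hst : ∀ i, Relation.ReflTransGen r (s i) (t i))
    (hts : ∀ i j : Fin k, (i : ℕ) + 1 = j → r (t i) (s j)) (h : 0 < k) (i : Fin k) :
    Relation.ReflTransGen r (s ⟨0, h⟩) (t i) := by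
  obtain ⟨i, hi⟩ := i
  induction i with
  | zero => exact hst _
  | succ i ih => exact ((ih (by omega)).tail (hts _ ⟨i + 1, hi⟩ rfl)).trans (hst _)

end Paths

variable {n m : ℕ}

theorem eq_of_var_eq_of_card_le {L : Finset (Lit n)} (hcard : L.card ≤ n)
    (hcover : ∀ i, ∃ c, (⟨i, c⟩ : Lit n) ∈ L) {l l' : Lit n} (hl : l ∈ L) (hl' : l' ∈ L)
    (hvar : l.var = l'.var) : l = l' := by
  have hsurj : Set.SurjOn Lit.var (L : Set (Lit n)) (Finset.univ : Finset (Fin n)) := fun i _ =>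
    let ⟨c, hc⟩ := hcover i
    ⟨⟨i, c⟩, hc, rfl⟩
  exact Finset.injOn_of_surjOn_of_card_le Lit.var (by simp [Set.MapsTo]) hsurj (by simpa)
    hl hl' hvar

theorem exists_satisfies_iff_exists_finset_lit (φ : CnfFormula n m) :
    (∃ σ, Satisfies φ σ) ↔ ∃ L : Finset (Lit n),
      L.card ≤ n ∧ (∀ i, ∃ c, ⟨i, c⟩ ∈ L) ∧ ∀ j, ∃ k, φ j k ∈ L := by
  constructor
  · rintro ⟨σ, hσ⟩
    refine ⟨Finset.univ.image fun i => ⟨i, σ i⟩, ?_, fun i => ⟨σ i, by simp⟩, fun j => ?_⟩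
    · exact Finset.card_image_le.trans_eq (by simp)
    · obtain ⟨k, hk⟩ := hσ j
      exact ⟨k, Finset.mem_image.2 ⟨(φ j k).var, Finset.mem_univ _, by rw [hk]⟩⟩
  · rintro ⟨L, hcard, hcover, hclause⟩
    choose σ hσ using hcover
    refine ⟨σ, fun j => ?_⟩
    obtain ⟨k, hk⟩ := hclause j
    have heq : ⟨(φ j k).var, σ (φ j k).var⟩ = φ j k :=
      eq_of_var_eq_of_card_le hcard (fun i => ⟨σ i, hσ i⟩) (hσ _) hk rfl
    exact ⟨k, congrArg Lit.pos heq⟩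

/-- The candidate edge of the variable gadget that corresponds to the literal `l`:
`(u_i^t, v_i^t)` for `x_i` and `(u_i^f, v_i^f)` for `¬x_i`. -/
def varEdge : Lit n → MceNode n m × MceNode n m
  | ⟨i, true⟩ => (.ut i, .vt i)
  | ⟨i, false⟩ => (.uf i, .vf i)

/-- The candidate edge `(a_j^k, b_j^k)` of the clause gadget. -/
def clauseEdge (j : Fin m) (k : Fin 3) : MceNode n m × MceNode n m :=
  (.ak j k, .bk j k)

/-- The class of candidate edges of a literal: `P_i` for `x_i` and `N_i` for `¬x_i`. -/
def litClass (φ : CnfFormula n m) : Lit n → Finset (MceNode n m × MceNode n m)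
  | ⟨i, true⟩ => Pclass φ i
  | ⟨i, false⟩ => Nclass φ i

/-- The selection consisting of the classes of the literals in `L`. -/
def classUnion (φ : CnfFormula n m) (L : Finset (Lit n)) : Finset (MceNode n m × MceNode n m) :=
  L.biUnion (litClass φ)

theorem varEdge_injective : Function.Injective (varEdge : Lit n → MceNode n m × MceNode n m) := by
  rintro ⟨i, _ | _⟩ ⟨i', _ | _⟩ h <;> simp_all [varEdge]

theorem clauseEdge_inj {j j' : Fin m} {k k' : Fin 3} :
    (clauseEdge j k : MceNode n m × MceNode n m) = clauseEdge j' k' ↔ j = j' ∧ k = k' := by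
  simp [clauseEdge]

theorem varEdge_ne_clauseEdge (l : Lit n) (j : Fin m) (k : Fin 3) :
    varEdge l ≠ clauseEdge j k := by
  rcases l with ⟨i, _ | _⟩ <;> simp [varEdge, clauseEdge]

theorem mem_litClass {φ : CnfFormula n m} {l : Lit n} {e : MceNode n m × MceNode n m} :
    e ∈ litClass φ l ↔ e = varEdge l ∨ ∃ j k, φ j k = l ∧ e = clauseEdge j k := by
  rcases l with ⟨i, _ | _⟩ <;> simp [litClass, Pclass, Nclass, varEdge, clauseEdge, eq_comm]

theorem varEdge_mem_litClass_iff {φ : CnfFormula n m} {l l' : Lit n} :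
    varEdge l ∈ litClass φ l' ↔ l = l' := by
  simp [mem_litClass, varEdge_injective.eq_iff, varEdge_ne_clauseEdge]

theorem clauseEdge_mem_litClass_iff {φ : CnfFormula n m} {j : Fin m} {k : Fin 3} {l : Lit n} :
    clauseEdge j k ∈ litClass φ l ↔ φ j k = l := by
  simp [mem_litClass, clauseEdge_inj, (varEdge_ne_clauseEdge l j k).symm]

theorem eq_of_mem_litClass {φ : CnfFormula n m} {l l' : Lit n} {e : MceNode n m × MceNode n m}
    (h : e ∈ litClass φ l) (h' : e ∈ litClass φ l') : l = l' := by
  obtain rfl | ⟨j, k, rfl, rfl⟩ := mem_litClass.1 h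
  · exact varEdge_mem_litClass_iff.1 h'
  · exact clauseEdge_mem_litClass_iff.1 h'

theorem mem_Ehat_iff_exists_mem_litClass {φ : CnfFormula n m} {e : MceNode n m × MceNode n m} :
    e ∈ Ehat φ ↔ ∃ l, e ∈ litClass φ l := by
  constructor
  · intro he
    obtain ⟨i, -, he⟩ := Finset.mem_biUnion.1 he
    obtain he | he := Finset.mem_union.1 he
    exacts [⟨⟨i, true⟩, he⟩, ⟨⟨i, false⟩, he⟩]
  · rintro ⟨⟨i, _ | _⟩, he⟩
    exacts [Finset.mem_biUnion.2 ⟨i, Finset.mem_univ i, Finset.mem_union_right _ he⟩,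
      Finset.mem_biUnion.2 ⟨i, Finset.mem_univ i, Finset.mem_union_left _ he⟩]

theorem eq_varEdge_or_eq_clauseEdge_of_mem_Ehat {φ : CnfFormula n m}
    {e : MceNode n m × MceNode n m} (he : e ∈ Ehat φ) :
    (∃ l, e = varEdge l) ∨ ∃ j k, e = clauseEdge j k := by
  obtain ⟨l, he⟩ := mem_Ehat_iff_exists_mem_litClass.1 he
  obtain he | ⟨j, k, -, he⟩ := mem_litClass.1 he
  exacts [.inl ⟨l, he⟩, .inr ⟨j, k, he⟩]

theorem isUnionOfClasses_iff_forall_litClass {φ : CnfFormula n m}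
    {R : Finset (MceNode n m × MceNode n m)} :
    IsUnionOfClasses φ R ↔ ∀ l, ∀ e ∈ litClass φ l, e ∈ R → litClass φ l ⊆ R := by
  constructor
  · rintro hR ⟨i, _ | _⟩ e he heR
    exacts [(hR i).2 ⟨e, Finset.mem_inter.2 ⟨he, heR⟩⟩, (hR i).1 ⟨e, Finset.mem_inter.2 ⟨he, heR⟩⟩]
  · refine fun hR i => ⟨fun ⟨e, he⟩ => ?_, fun ⟨e, he⟩ => ?_⟩
    · exact hR ⟨i, true⟩ e (Finset.mem_inter.1 he).1 (Finset.mem_inter.1 he).2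
    · exact hR ⟨i, false⟩ e (Finset.mem_inter.1 he).1 (Finset.mem_inter.1 he).2

theorem mem_classUnion {φ : CnfFormula n m} {L : Finset (Lit n)} {e : MceNode n m × MceNode n m} :
    e ∈ classUnion φ L ↔ ∃ l ∈ L, e ∈ litClass φ l :=
  Finset.mem_biUnion

theorem varEdge_mem_classUnion_iff {φ : CnfFormula n m} {L : Finset (Lit n)} {l : Lit n} :
    varEdge l ∈ classUnion φ L ↔ l ∈ L := by
  simp [mem_classUnion, varEdge_mem_litClass_iff]

theorem clauseEdge_mem_classUnion_iff {φ : CnfFormula n m} {L : Finset (Lit n)} {j : Fin m}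
    {k : Fin 3} : clauseEdge j k ∈ classUnion φ L ↔ φ j k ∈ L := by
  simp [mem_classUnion, clauseEdge_mem_litClass_iff]

theorem classUnion_subset_Ehat (φ : CnfFormula n m) (L : Finset (Lit n)) :
    classUnion φ L ⊆ Ehat φ := fun _ he =>
  let ⟨l, _, hl⟩ := mem_classUnion.1 he
  mem_Ehat_iff_exists_mem_litClass.2 ⟨l, hl⟩

theorem isUnionOfClasses_classUnion (φ : CnfFormula n m) (L : Finset (Lit n)) :
    IsUnionOfClasses φ (classUnion φ L) := by
  refine isUnionOfClasses_iff_forall_litClass.2 fun l e hel heL => ?_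
  obtain ⟨l', hl', hel'⟩ := mem_classUnion.1 heL
  obtain rfl := eq_of_mem_litClass hel hel'
  exact Finset.subset_biUnion_of_mem (litClass φ) hl'

theorem IsUnionOfClasses.exists_eq_classUnion {φ : CnfFormula n m}
    {R : Finset (MceNode n m × MceNode n m)} (hR : IsUnionOfClasses φ R) (hsub : R ⊆ Ehat φ) :
    ∃ L, R = classUnion φ L := by
  rw [isUnionOfClasses_iff_forall_litClass] at hR
  refine ⟨R.preimage varEdge varEdge_injective.injOn, Finset.ext fun e => ?_⟩
  simp only [mem_classUnion, Finset.mem_preimage]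
  constructor
  · intro he
    obtain ⟨l, hl⟩ := mem_Ehat_iff_exists_mem_litClass.1 (hsub he)
    exact ⟨l, hR l e hl he (varEdge_mem_litClass_iff.2 rfl), hl⟩
  · rintro ⟨l, hl, he⟩
    exact hR l (varEdge l) (varEdge_mem_litClass_iff.2 rfl) hl he

theorem edgeWeight_varEdge (l : Lit n) :
    edgeWeight (varEdge l : MceNode n m × MceNode n m) = 1 := by
  rcases l with ⟨i, _ | _⟩ <;> rfl

theorem edgeWeight_clauseEdge (j : Fin m) (k : Fin 3) :
    edgeWeight (clauseEdge j k : MceNode n m × MceNode n m) = 0 :=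
  rfl

theorem selWeight_litClass (φ : CnfFormula n m) (l : Lit n) : selWeight (litClass φ l) = 1 := by
  have hzero : ∀ e ∈ litClass φ l, e ≠ varEdge l → edgeWeight e = 0 := by
    intro e he hne
    obtain ⟨j, k, -, rfl⟩ := (mem_litClass.1 he).resolve_left hne
    exact edgeWeight_clauseEdge j k
  rw [selWeight, Finset.sum_eq_single_of_mem _ (varEdge_mem_litClass_iff.2 rfl) hzero,
    edgeWeight_varEdge]

theorem selWeight_classUnion (φ : CnfFormula n m) (L : Finset (Lit n)) :
    selWeight (classUnion φ L) = L.card := by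
  have hdisj : (L : Set (Lit n)).PairwiseDisjoint (litClass φ) := fun l _ l' _ hne =>
    Finset.disjoint_left.2 fun _ he he' => hne (eq_of_mem_litClass he he')
  calc selWeight (classUnion φ L)
      = ∑ l ∈ L, selWeight (litClass φ l) := Finset.sum_biUnion hdisj
    _ = L.card := by simp [selWeight_litClass]

/-- The number of candidate edges that a path from the source has crossed when it reaches a node.
The gadgets are counted from `0`: those of the variables are `0, …, n - 1` and those of the clauses
are `n, …, n + m - 1`. -/
def MceNode.level : MceNode n m → ℕ
  | .u i | .ut i | .uf i => i
  | .vt i | .vf i | .v i => i + 1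
  | .a j | .ak j _ => n + j
  | .bk j _ | .b j => n + j + 1

theorem SolidEdge.level_eq {x y : MceNode n m} (h : SolidEdge n m x y) : x.level = y.level := by
  cases h <;> simp only [MceNode.level] <;> omega

theorem level_varEdge_fst (l : Lit n) :
    (varEdge l : MceNode n m × MceNode n m).1.level = l.var := by
  rcases l with ⟨i, _ | _⟩ <;> rfl

theorem level_varEdge_snd (l : Lit n) :
    (varEdge l : MceNode n m × MceNode n m).2.level = l.var + 1 := by
  rcases l with ⟨i, _ | _⟩ <;> rfl

theorem Connects.exists_mem_crossing {hn : 0 < n} {hm : 0 < m}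
    {R : Finset (MceNode n m × MceNode n m)} (hR : Connects hn hm R) {g : ℕ} (hg : g < n + m) :
    ∃ e ∈ R, e.1.level ≤ g ∧ g < e.2.level := by
  obtain ⟨x, y, hxy, hx, hy⟩ := exists_rel_leaving_of_reflTransGen
    (p := fun x => x.level ≤ g) hR (by simp [MceNode.level]) (by simp only [MceNode.level]; omega)
  obtain hsolid | hmem := hxy
  · exact absurd (hsolid.level_eq ▸ hx) hy
  · exact ⟨(x, y), hmem, hx, not_le.1 hy⟩

theorem Connects.exists_varEdge_mem {φ : CnfFormula n m} {hn : 0 < n} {hm : 0 < m}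
    {R : Finset (MceNode n m × MceNode n m)} (hR : Connects hn hm R) (hsub : R ⊆ Ehat φ)
    (i : Fin n) : ∃ c, varEdge ⟨i, c⟩ ∈ R := by
  obtain ⟨e, he, h₁, h₂⟩ := hR.exists_mem_crossing (g := i) (by omega)
  obtain ⟨l, rfl⟩ | ⟨j, k, rfl⟩ := eq_varEdge_or_eq_clauseEdge_of_mem_Ehat (hsub he)
  · rw [level_varEdge_fst] at h₁
    rw [level_varEdge_snd] at h₂
    obtain rfl : l.var = i := by omega
    exact ⟨l.pos, he⟩
  · simp only [clauseEdge, MceNode.level] at h₁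
    omega

theorem Connects.exists_clauseEdge_mem {φ : CnfFormula n m} {hn : 0 < n} {hm : 0 < m}
    {R : Finset (MceNode n m × MceNode n m)} (hR : Connects hn hm R) (hsub : R ⊆ Ehat φ)
    (j : Fin m) : ∃ k, clauseEdge j k ∈ R := by
  obtain ⟨e, he, h₁, h₂⟩ := hR.exists_mem_crossing (g := n + j) (by omega)
  obtain ⟨l, rfl⟩ | ⟨j', k, rfl⟩ := eq_varEdge_or_eq_clauseEdge_of_mem_Ehat (hsub he)
  · rw [level_varEdge_snd] at h₂
    omega
  · simp only [clauseEdge, MceNode.level] at h₁ h₂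
    obtain rfl : j' = j := by omega
    exact ⟨k, he⟩

/-- The edges that a path may use under the selection `R`: the solid edges and those of `R`. -/
def UsableEdge (R : Finset (MceNode n m × MceNode n m)) (x y : MceNode n m) : Prop :=
  SolidEdge n m x y ∨ (x, y) ∈ R

theorem reflTransGen_u_v {R : Finset (MceNode n m × MceNode n m)} {i : Fin n} {c : Bool}
    (hic : varEdge ⟨i, c⟩ ∈ R) : Relation.ReflTransGen (UsableEdge R) (.u i) (.v i) := by
  cases c
  · exact .head (.inl (.u_uf i)) (.head (.inr hic) (.single (.inl (.vf_v i))))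
  · exact .head (.inl (.u_ut i)) (.head (.inr hic) (.single (.inl (.vt_v i))))

theorem reflTransGen_a_b {R : Finset (MceNode n m × MceNode n m)} {j : Fin m} {k : Fin 3}
    (hjk : clauseEdge j k ∈ R) : Relation.ReflTransGen (UsableEdge R) (.a j) (.b j) :=
  .head (.inl (.a_ak j k)) (.head (.inr hjk) (.single (.inl (.bk_b j k))))

theorem connects_of_forall_exists_mem (hn : 0 < n) (hm : 0 < m)
    {R : Finset (MceNode n m × MceNode n m)} (hvar : ∀ i, ∃ c, varEdge ⟨i, c⟩ ∈ R)
    (hclause : ∀ j, ∃ k, clauseEdge j k ∈ R) : Connects hn hm R := by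
  have hvars : Relation.ReflTransGen (UsableEdge R)
      (.u ⟨0, hn⟩) (.v ⟨n - 1, Nat.sub_lt hn Nat.one_pos⟩) :=
    reflTransGen_of_linked_segments (fun i => (hvar i).elim fun _ hc => reflTransGen_u_v hc)
      (fun i i' h => .inl (.v_u i i' h)) hn _
  have hlink : UsableEdge R (.v ⟨n - 1, Nat.sub_lt hn Nat.one_pos⟩) (.a ⟨0, hm⟩) :=
    .inl (.v_a _ _ (Nat.sub_add_cancel hn) rfl)
  have hclauses : Relation.ReflTransGen (UsableEdge R)
      (.a ⟨0, hm⟩) (.b ⟨m - 1, Nat.sub_lt hm Nat.one_pos⟩) :=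
    reflTransGen_of_linked_segments (fun j => (hclause j).elim fun _ hk => reflTransGen_a_b hk)
      (fun j j' h => .inl (.b_a j j' h)) hm _
  exact (hvars.tail hlink).trans hclauses

theorem connects_classUnion_iff (hn : 0 < n) (hm : 0 < m) (φ : CnfFormula n m)
    (L : Finset (Lit n)) :
    Connects hn hm (classUnion φ L) ↔ (∀ i, ∃ c, ⟨i, c⟩ ∈ L) ∧ ∀ j, ∃ k, φ j k ∈ L := by
  have hsub := classUnion_subset_Ehat φ L
  constructor
  · intro h
    exact ⟨by simpa only [varEdge_mem_classUnion_iff] using h.exists_varEdge_mem hsub,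
      by simpa only [clauseEdge_mem_classUnion_iff] using h.exists_clauseEdge_mem hsub⟩
  · rintro ⟨hvar, hclause⟩
    exact connects_of_forall_exists_mem hn hm
      (by simpa only [varEdge_mem_classUnion_iff] using hvar)
      (by simpa only [clauseEdge_mem_classUnion_iff] using hclause)

/-- Correctness of the reduction from 3-CNF-SAT to the Minimal Connecting
Edge problem: `φ` is satisfiable iff there is a selection `R ⊆ Ê` that is a
union of classes, has total weight at most `n`, and connects the source `u_1`
to the sink `b_m`. -/
theorem mce_reduction_correct {n m : ℕ} (hn : 0 < n) (hm : 0 < m)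
    (φ : CnfFormula n m) :
    (∃ σ : Fin n → Bool, Satisfies φ σ) ↔
      ∃ R : Finset (MceNode n m × MceNode n m),
        R ⊆ Ehat φ ∧ IsUnionOfClasses φ R ∧ selWeight R ≤ n ∧
          Connects hn hm R := by
  rw [exists_satisfies_iff_exists_finset_lit]
  constructor
  · rintro ⟨L, hcard, hL⟩
    exact ⟨classUnion φ L, classUnion_subset_Ehat φ L, isUnionOfClasses_classUnion φ L,
      (selWeight_classUnion φ L).trans_le hcard, (connects_classUnion_iff hn hm φ L).2 hL⟩
  · rintro ⟨R, hsub, hunion, hweight, hconn⟩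
    obtain ⟨L, rfl⟩ := hunion.exists_eq_classUnion hsub
    exact ⟨L, (selWeight_classUnion φ L).symm.trans_le hweight,
      (connects_classUnion_iff hn hm φ L).1 hconn⟩
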